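/- Let d ≥ 2 and let b be a collision kernel satisfying the Lévy condition. Then for every smooth F : S^{d-1} → ℝ with F(−σ) = F(σ), the Hardy-type inequality holds: ∬_{S^{d-1}×S^{d-1}} (F(σ') − F(σ))² b(σ'·σ) dσ' dσ ≤ C_P ∫_{S^{d-1}} |∇_σ F|² dσ, where C_P = (1/(d−1)) ∫_{S^{d-1}} (1 − (e·σ')²) b(e·σ') dσ' (the integral being independent of the unit vector e). -/

import Mathlib

open MeasureTheory
open scoped RealInnerProductSpace

noncomputable section

/-- Euclidean space `ℝ^d`. -/
abbrev E (d : ℕ) : Type := EuclideanSpace ℝ (Fin d)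

/-- The unit sphere `S^{d-1}` of `ℝ^d`. -/
abbrev Sph (d : ℕ) : Type := Metric.sphere (0 : E d) 1

/-- The surface measure on the unit sphere, realized as a Hausdorff measure. -/
def sphMeasure (d : ℕ) : Measure (Sph d) := μH[(d : ℝ) - 1]

open Classical in
/-- The 0-homogeneous extension of a function defined on the unit sphere. -/
def homogExt {d : ℕ} (F : Sph d → ℝ) (x : E d) : ℝ :=
  if hx : x = 0 then 0
  else F ⟨‖x‖⁻¹ • x, by
    rw [mem_sphere_zero_iff_norm, norm_smul, norm_inv, norm_norm,
      inv_mul_cancel₀ (norm_ne_zero_iff.mpr hx)]⟩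

/-- Smoothness of a function on the sphere, via its 0-homogeneous extension. -/
def SphSmooth {d : ℕ} (F : Sph d → ℝ) : Prop :=
  ContDiffOn ℝ (⊤ : ℕ∞) (homogExt F) {x : E d | x ≠ 0}

/-- Spherical gradient: the Euclidean gradient of the 0-homogeneous extension. -/
def sphGrad {d : ℕ} (F : Sph d → ℝ) (σ : Sph d) : E d :=
  gradient (homogExt F) (σ : E d)

/-- Euclidean Laplacian of a function on `ℝ^d`. -/
def lapl {d : ℕ} (f : E d → ℝ) (x : E d) : ℝ :=
  ∑ i : Fin d,
    fderiv ℝ (fun y => fderiv ℝ f y (EuclideanSpace.single i 1)) x (EuclideanSpace.single i 1)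

/-- Spherical Laplacian: the Euclidean Laplacian of the 0-homogeneous extension. -/
def sphLap {d : ℕ} (F : Sph d → ℝ) (σ : Sph d) : ℝ :=
  lapl (homogExt F) (σ : E d)

/-- The spherical linear Boltzmann operator `𝓑` with kernel `b`. -/
def sphB {d : ℕ} (b : ℝ → ℝ) (F : Sph d → ℝ) (σ : Sph d) : ℝ :=
  ∫ (σ' : Sph d), (F σ' - F σ) * b ⟪(σ' : E d), (σ : E d)⟫ ∂(sphMeasure d)

/-- The intertwined iterated carré du champ `Γ²_{𝓑,Δ}(g,g)`. -/
def Gamma2BD {d : ℕ} (b : ℝ → ℝ) (g : Sph d → ℝ) (σ : Sph d) : ℝ :=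
  (1 / 2) * sphB b (fun τ => ‖sphGrad g τ‖ ^ 2) σ
    - ⟪sphGrad g σ, sphGrad (fun τ => sphB b g τ) σ⟫

/-- The iterated carré du champ `Γ²_{Δ,Δ}(g,g)` of the spherical Laplacian. -/
def Gamma2DD {d : ℕ} (g : Sph d → ℝ) (σ : Sph d) : ℝ :=
  (1 / 2) * sphLap (fun τ => ‖sphGrad g τ‖ ^ 2) σ
    - ⟪sphGrad g σ, sphGrad (fun τ => sphLap g τ) σ⟫

/-- A collision kernel: non-negative, measurable, satisfying the Lévy condition. -/
def LevyKernel (d : ℕ) (b : ℝ → ℝ) : Prop :=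
  Measurable b ∧ (∀ c ∈ Set.Icc (-1 : ℝ) 1, 0 ≤ b c) ∧
    ∀ e : Sph d,
      Integrable
        (fun σ' : Sph d => (1 - ⟪(e : E d), (σ' : E d)⟫ ^ 2) * b ⟪(e : E d), (σ' : E d)⟫)
        (sphMeasure d)

/-- The log-Sobolev inequality `LS(Λ, b)` on the sphere. -/
def LS (d : ℕ) (b : ℝ → ℝ) (Λ : ℝ) : Prop :=
  ∀ f : Sph d → ℝ, SphSmooth f → (∀ σ, 0 < f σ) → (∀ σ, f (-σ) = f σ) →
    Λ * ∫ (σ : Sph d), (∫ (σ' : Sph d),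
          (f σ' - f σ) ^ 2 / (f σ' + f σ) * b ⟪(σ' : E d), (σ : E d)⟫ ∂(sphMeasure d))
        ∂(sphMeasure d)
      ≤ ∫ (σ : Sph d), Gamma2BD b (fun τ => Real.log (f τ)) σ * f σ ∂(sphMeasure d)

/-!
On a great circle `γ` an even function `f` restricts to a `π`-periodic function, whose Fourier modes
are all even. Parseval then bounds `∫ |f (γ (φ + θ)) - f (γ φ)|² dφ` by `sin² θ ∫ |(f ∘ γ)'|² dφ`,
because `|sin (n θ)| ≤ n |sin θ|`. Averaging over the orthogonal group turns this into an estimate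
for two points at angle `θ`, in which the derivative of `f` along `γ` occurs in a uniformly
distributed tangent direction; its mean square is `1 / (d - 1)` times that of the gradient.
Multiplying by the kernel, a function of `cos θ`, and integrating over pairs of points gives the
inequality, with `sin² θ = 1 - (e · σ')²` producing the constant.
-/

section Fourier

open Real

theorem norm_zpow_sub_one_le {𝕜 : Type*} [NormedDivisionRing 𝕜] {z : 𝕜} (hz : ‖z‖ = 1) (n : ℤ) :
    ‖z ^ n - 1‖ ≤ |(n : ℝ)| * ‖z - 1‖ := by
  have hpow (m : ℕ) : ‖z ^ m - 1‖ ≤ m * ‖z - 1‖ := by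
    rw [← geom_sum_mul, norm_mul]
    gcongr
    simpa [hz] using norm_sum_le (Finset.range m) fun i => z ^ i
  obtain ⟨m, rfl | rfl⟩ := n.eq_nat_or_neg
  · simpa using hpow m
  · have hz0 : z ^ m ≠ 0 := pow_ne_zero m <| norm_ne_zero_iff.mp (by simp [hz])
    have hinv : ‖(z ^ m)⁻¹ - 1‖ = ‖z ^ m - 1‖ := by
      rw [← norm_neg, show -((z ^ m)⁻¹ - 1) = (z ^ m)⁻¹ * (z ^ m - 1) by
        rw [mul_sub, inv_mul_cancel₀ hz0, mul_one, neg_sub], norm_mul]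
      simp [hz]
    simpa [hinv] using hpow m

theorem fourier_apply_add {T : ℝ} (n : ℤ) (x y : AddCircle T) :
    fourier n (x + y) = fourier n x * fourier n y := by
  rw [fourier_apply, smul_add, AddCircle.toCircle_add, Circle.coe_mul, fourier_apply,
    fourier_apply]

theorem norm_fourier_coe_sub_one_le {T : ℝ} (n : ℤ) (θ : ℝ) :
    ‖fourier n (θ : AddCircle T) - 1‖ ≤ |(n : ℝ)| * (2 * |sin (π * θ / T)|) := by
  have hone : ‖fourier 1 (θ : AddCircle T) - 1‖ = 2 * |sin (π * θ / T)| := by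
    have harg : 2 * π * Complex.I * (1 : ℤ) * θ / T = Complex.I * ((2 * (π * θ / T) : ℝ) : ℂ) := by
      push_cast
      ring
    rw [fourier_coe_apply, harg, Complex.norm_exp_I_mul_ofReal_sub_one]
    simp
  rw [fourier_apply, AddCircle.toCircle_zsmul, Circle.coe_zpow, ← hone, fourier_one]
  exact norm_zpow_sub_one_le (Circle.norm_coe _) n

theorem fourierCoeffOn_sub {V : Type*} [NormedAddCommGroup V] [NormedSpace ℂ V] {a b : ℝ}
    {f g : ℝ → V} (hab : a < b) (hf : IntervalIntegrable f volume a b)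
    (hg : IntervalIntegrable g volume a b) (n : ℤ) :
    fourierCoeffOn hab (fun x => f x - g x) n
      = fourierCoeffOn hab f n - fourierCoeffOn hab g n := by
  have hcont : Continuous fun x : ℝ => fourier (-n) (x : AddCircle (b - a)) :=
    (map_continuous _).comp (AddCircle.continuous_mk' _)
  simp only [fourierCoeffOn_eq_integral, smul_sub]
  rw [intervalIntegral.integral_sub (hf.continuousOn_smul hcont.continuousOn)
    (hg.continuousOn_smul hcont.continuousOn), smul_sub]

theorem fourierCoeffOn_comp_add_right {V : Type*} [NormedAddCommGroup V] [NormedSpace ℂ V]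
    {a b : ℝ} {f : ℝ → V} (hab : a < b) (hf : Function.Periodic f (b - a)) (θ : ℝ) (n : ℤ) :
    fourierCoeffOn hab (fun x => f (x + θ)) n
      = fourier n (θ : AddCircle (b - a)) • fourierCoeffOn hab f n := by
  let g (x : ℝ) : V := fourier (-n) (x : AddCircle (b - a)) • f x
  have hg : Function.Periodic g (b - a) := fun x => by
    simp only [g, AddCircle.coe_add_period, hf x]
  have hshift (x : ℝ) : fourier (-n) (x : AddCircle (b - a)) • f (x + θ)
      = fourier n (θ : AddCircle (b - a)) • g (x + θ) := by
    rw [smul_smul, AddCircle.coe_add, fourier_apply_add, mul_left_comm, ← fourier_add,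
      add_neg_cancel, fourier_zero, mul_one]
  have hint : ∫ x in a..b, g (x + θ) = ∫ x in a..b, g x := by
    have h := hg.intervalIntegral_add_eq (a + θ) a
    rwa [show a + θ + (b - a) = b + θ by ring, add_sub_cancel,
      ← intervalIntegral.integral_comp_add_right] at h
  simp only [fourierCoeffOn_eq_integral, hshift, intervalIntegral.integral_smul, hint]
  rw [smul_comm]

theorem fourierCoeffOn_of_hasDerivAt_of_eq {a b : ℝ} {f f' : ℝ → ℂ} (hab : a < b)
    (hf : ∀ x ∈ Set.uIcc a b, HasDerivAt f (f' x) x) (hf' : IntervalIntegrable f' volume a b)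
    (hfab : f a = f b) (n : ℤ) :
    fourierCoeffOn hab f' n = 2 * π * Complex.I * n / (b - a) * fourierCoeffOn hab f n := by
  rcases eq_or_ne n 0 with rfl | hn
  · simp [fourierCoeffOn_eq_integral, intervalIntegral.integral_eq_sub_of_hasDerivAt hf hf', hfab]
  · have hba : (b - a : ℂ) ≠ 0 := by exact_mod_cast (sub_pos.mpr hab).ne'
    rw [fourierCoeffOn_of_hasDerivAt hab hn hf hf', hfab]
    field_simp [Complex.I_ne_zero]
    ring

theorem norm_fourierCoeffOn_comp_add_right_sub_le {a b : ℝ} {f f' : ℝ → ℂ} (hab : a < b)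
    (hf : ∀ x, HasDerivAt f (f' x) x) (hf' : IntervalIntegrable f' volume a b)
    (hper : Function.Periodic f (b - a)) (θ : ℝ) (n : ℤ) :
    ‖fourierCoeffOn hab (fun x => f (x + θ) - f x) n‖
      ≤ (b - a) / π * |sin (π * θ / (b - a))| * ‖fourierCoeffOn hab f' n‖ := by
  have hfc : Continuous f := continuous_iff_continuousAt.mpr fun x => (hf x).continuousAt
  have hba : 0 < b - a := sub_pos.mpr hab
  have hfab : f a = f b := by simpa using (hper a).symm
  have hderiv : ‖fourierCoeffOn hab f' n‖
      = 2 * π * |(n : ℝ)| / (b - a) * ‖fourierCoeffOn hab f n‖ := by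
    rw [fourierCoeffOn_of_hasDerivAt_of_eq hab (fun x _ => hf x) hf' hfab, ← Complex.ofReal_sub,
      norm_mul, norm_div, Complex.norm_of_nonneg hba.le]
    simp [abs_of_pos pi_pos]
  rw [fourierCoeffOn_sub hab ((by fun_prop : Continuous fun x => f (x + θ)).intervalIntegrable _ _)
    (hfc.intervalIntegrable _ _), fourierCoeffOn_comp_add_right hab hper, hderiv,
    show fourier n (θ : AddCircle (b - a)) • fourierCoeffOn hab f n - fourierCoeffOn hab f n
      = (fourier n (θ : AddCircle (b - a)) - 1) * fourierCoeffOn hab f n by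
      rw [smul_eq_mul, sub_mul, one_mul], norm_mul]
  calc _ ≤ |(n : ℝ)| * (2 * |sin (π * θ / (b - a))|) * ‖fourierCoeffOn hab f n‖ := by
        gcongr
        exact norm_fourier_coe_sub_one_le n θ
    _ = _ := by field_simp

theorem memLp_two_restrict_Ioc {g : ℝ → ℂ} (hg : Continuous g) (a b : ℝ) :
    MemLp g 2 (volume.restrict (Set.Ioc a b)) :=
  (memLp_two_iff_integrable_sq_norm hg.aestronglyMeasurable).mpr
    (hg.norm.pow 2).integrableOn_Ioc

theorem integral_norm_comp_add_right_sub_sq_le {a b : ℝ} {f f' : ℝ → ℂ} (hab : a < b)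
    (hf : ∀ x, HasDerivAt f (f' x) x) (hf' : Continuous f') (hper : Function.Periodic f (b - a))
    (θ : ℝ) :
    ∫ x in a..b, ‖f (x + θ) - f x‖ ^ 2
      ≤ ((b - a) / π * sin (π * θ / (b - a))) ^ 2 * ∫ x in a..b, ‖f' x‖ ^ 2 := by
  have hfc : Continuous f := continuous_iff_continuousAt.mpr fun x => (hf x).continuousAt
  have hba : 0 < b - a := sub_pos.mpr hab
  have hparseval := hasSum_sq_fourierCoeffOn hab
    (memLp_two_restrict_Ioc (g := fun x => f (x + θ) - f x) (by fun_prop) a b)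
  have hparseval' := (hasSum_sq_fourierCoeffOn hab (memLp_two_restrict_Ioc hf' a b)).mul_left
    (((b - a) / π * sin (π * θ / (b - a))) ^ 2)
  have hle := hasSum_le (fun n => ?_) hparseval hparseval'
  · rw [smul_eq_mul, smul_eq_mul, mul_left_comm] at hle
    exact le_of_mul_le_mul_left hle (inv_pos.mpr hba)
  · rw [← sq_abs (_ * _), ← mul_pow, abs_mul, abs_of_pos (div_pos hba pi_pos)]
    gcongr
    exact norm_fourierCoeffOn_comp_add_right_sub_le hab hf (hf'.intervalIntegrable _ _) hper θ n

theorem lintegral_enorm_comp_add_right_sub_sq_le {f f' : ℝ → ℝ}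
    (hf : ∀ x, HasDerivAt f (f' x) x) (hf' : Continuous f') (hper : Function.Periodic f π)
    (θ : ℝ) :
    ∫⁻ x in Set.Ioc 0 π, ‖f (x + θ) - f x‖ₑ ^ 2
      ≤ ‖sin θ‖ₑ ^ 2 * ∫⁻ x in Set.Ioc 0 π, ‖f' x‖ₑ ^ 2 := by
  have hfc : Continuous f := continuous_iff_continuousAt.mpr fun x => (hf x).continuousAt
  have hlintegral {g : ℝ → ℝ} (hg : Continuous g) :
      ∫⁻ x in Set.Ioc 0 π, ‖g x‖ₑ ^ 2 = ENNReal.ofReal (∫ x in 0..π, ‖g x‖ ^ 2) := by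
    have hint : IntegrableOn (fun x => ‖g x‖ ^ 2) (Set.Ioc 0 π) := (hg.norm.pow 2).integrableOn_Ioc
    rw [intervalIntegral.integral_of_le pi_pos.le,
      ofReal_integral_eq_lintegral_ofReal hint (.of_forall fun x => sq_nonneg _)]
    simp only [ENNReal.ofReal_pow (norm_nonneg _), ofReal_norm]
  have hle := integral_norm_comp_add_right_sub_sq_le pi_pos (fun x => (hf x).ofReal_comp)
    (Complex.continuous_ofReal.comp hf') (fun x => by simp [hper x]) θ
  simp only [sub_zero, div_self pi_ne_zero, one_mul, mul_div_cancel_left₀ θ pi_ne_zero,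
    ← Complex.ofReal_sub, Complex.norm_real] at hle
  rw [hlintegral (g := fun x => f (x + θ) - f x) (by fun_prop), hlintegral hf', ← ofReal_norm,
    ← ENNReal.ofReal_pow (norm_nonneg _), ← ENNReal.ofReal_mul (by positivity), norm_eq_abs, sq_abs]
  exact ENNReal.ofReal_le_ofReal hle

end Fourier

section SphereHausdorff

open Module Metric Topology

variable {V : Type*} [NormedAddCommGroup V] [InnerProductSpace ℝ V]

theorem exists_mem_nhds_lipschitzOnWith_stereographic_symm {v : V} (hv : ‖v‖ = 1)
    (w : (ℝ ∙ v)ᗮ) : ∃ C, ∃ t ∈ 𝓝 w, LipschitzOnWith C (stereographic hv).symm t := by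
  have h : ContDiff ℝ 1 fun w : (ℝ ∙ v)ᗮ => stereoInvFunAux v (w : V) :=
    contDiff_stereoInvFunAux.comp (ℝ ∙ v)ᗮ.subtypeL.contDiff
  obtain ⟨C, t, ht, hC⟩ := (h.contDiffAt (x := w)).exists_lipschitzOnWith
  exact ⟨C, t, ht, fun x hx y hy => hC hx hy⟩

variable [FiniteDimensional ℝ V] [MeasurableSpace V] [BorelSpace V]

theorem exists_mem_nhds_hausdorffMeasure_sphere_lt_top (σ : sphere (0 : V) 1) :
    ∃ t ∈ 𝓝 σ, μH[(finrank ℝ V : ℝ) - 1] t < ⊤ := by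
  have hpole : ‖((-σ : sphere (0 : V) 1) : V)‖ = 1 := norm_eq_of_mem_sphere _
  let φ := stereographic hpole
  have hsource : σ ∈ φ.source := by
    rw [stereographic_source]
    exact ne_neg_of_mem_unit_sphere ℝ σ
  obtain ⟨C, t, ht, hC⟩ := exists_mem_nhds_lipschitzOnWith_stereographic_symm hpole (φ σ)
  have hpole0 := ne_zero_of_mem_unit_sphere (-σ : sphere (0 : V) 1)
  have : Nontrivial V := ⟨_, 0, hpole0⟩
  have : Fact (finrank ℝ V = finrank ℝ V - 1 + 1) := ⟨(Nat.sub_add_cancel finrank_pos).symm⟩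
  have hdim : (finrank ℝ V : ℝ) - 1 = finrank ℝ (ℝ ∙ ((-σ : sphere (0 : V) 1) : V))ᗮ := by
    rw [Submodule.finrank_orthogonal_span_singleton (n := finrank ℝ V - 1) hpole0,
      Nat.cast_pred finrank_pos]
  refine ⟨φ.symm '' (t ∩ closedBall (φ σ) 1), ?_, ?_⟩
  · have h := φ.symm.image_mem_nhds (φ.map_source hsource)
      (Filter.inter_mem ht (closedBall_mem_nhds (φ σ) one_pos))
    rwa [φ.left_inv hsource] at h
  · rw [hdim]
    calc _ ≤ _ := (hC.mono Set.inter_subset_left).hausdorffMeasure_image_le (Nat.cast_nonneg _)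
      _ < ⊤ := ENNReal.mul_lt_top (by simp)
        ((measure_mono Set.inter_subset_right).trans_lt
          (isCompact_closedBall (φ σ) 1).measure_lt_top)

theorem isFiniteMeasure_hausdorffMeasure_sphere :
    IsFiniteMeasure (μH[(finrank ℝ V : ℝ) - 1] : Measure (sphere (0 : V) 1)) := by
  refine ⟨isCompact_univ.measure_lt_top_of_nhdsWithin fun σ _ => ?_⟩
  rw [nhdsWithin_univ]
  exact exists_mem_nhds_hausdorffMeasure_sphere_lt_top σ

instance (d : ℕ) : IsFiniteMeasure (sphMeasure d) := by
  have h := isFiniteMeasure_hausdorffMeasure_sphere (V := E d)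
  rwa [finrank_euclideanSpace_fin] at h

end SphereHausdorff

theorem exists_isProbabilityMeasure_isMulRightInvariant (G : Type*) [Group G] [TopologicalSpace G]
    [IsTopologicalGroup G] [CompactSpace G] [MeasurableSpace G] [BorelSpace G] :
    ∃ ν : Measure G, IsProbabilityMeasure ν ∧ ν.IsMulRightInvariant := by
  refine ⟨(Measure.haarMeasure (⊤ : TopologicalSpace.PositiveCompacts G)).inv, ⟨?_⟩, inferInstance⟩
  rw [Measure.inv_apply, Set.inv_univ]
  exact Measure.haarMeasure_self

/-- The orthogonal group of a real inner product space, as a topological group inside the bounded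
operators, acting on the space by evaluation. -/
abbrev OrthogonalGroup (V : Type*) [NormedAddCommGroup V] [InnerProductSpace ℝ V]
    [CompleteSpace V] : Type _ :=
  unitary (V →L[ℝ] V)

namespace OrthogonalGroup

open Metric

variable {V : Type*} [NormedAddCommGroup V] [InnerProductSpace ℝ V] {ι : Type*} {v w : ι → V}

section CompleteSpace

variable [CompleteSpace V]

@[simp]
theorem norm_smul_eq (g : OrthogonalGroup V) (x : V) : ‖g • x‖ = ‖x‖ :=
  Unitary.norm_map g x

@[simp]
theorem inner_smul_smul (g : OrthogonalGroup V) (x y : V) : ⟪g • x, g • y⟫ = ⟪x, y⟫ :=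
  Unitary.inner_map_map g x y

theorem orthonormal_smul (hv : Orthonormal ℝ v) (g : OrthogonalGroup V) :
    Orthonormal ℝ fun i => g • v i :=
  ⟨fun i => by simpa using hv.1 i, fun i j hij => by simpa using hv.2 hij⟩

instance : ContinuousStar (V →L[ℝ] V) :=
  ⟨(ContinuousLinearMap.adjoint (𝕜 := ℝ) (E := V) (F := V)).continuous⟩

instance : ContinuousSMul (OrthogonalGroup V) V :=
  ⟨by
    change Continuous fun p : OrthogonalGroup V × V => (p.1 : V →L[ℝ] V) p.2
    fun_prop⟩

instance : MulAction (OrthogonalGroup V) (sphere (0 : V) 1) where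
  smul g σ := ⟨g • (σ : V), by simp⟩
  one_smul σ := Subtype.ext (one_smul _ (σ : V))
  mul_smul g h σ := Subtype.ext (mul_smul g h (σ : V))

@[simp]
theorem coe_smul_sphere (g : OrthogonalGroup V) (σ : sphere (0 : V) 1) :
    ((g • σ : sphere (0 : V) 1) : V) = g • (σ : V) := rfl

instance : IsIsometricSMul (OrthogonalGroup V) (sphere (0 : V) 1) :=
  ⟨fun g => Isometry.of_dist_eq fun σ τ => by
    simp [Subtype.dist_eq, dist_eq_norm, ← smul_sub]⟩

instance : ContinuousSMul (OrthogonalGroup V) (sphere (0 : V) 1) :=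
  ⟨Continuous.subtype_mk (f := fun p : OrthogonalGroup V × sphere (0 : V) 1 => p.1 • (p.2 : V))
    (by fun_prop) _⟩

end CompleteSpace

variable [FiniteDimensional ℝ V]

instance : CompactSpace (OrthogonalGroup V) := by
  refine isCompact_iff_compactSpace.mp <| isCompact_of_isClosed_isBounded isClosed_unitary <|
    (isBounded_closedBall (x := (0 : V →L[ℝ] V)) (r := 1)).subset fun u hu => ?_
  rw [mem_closedBall_zero_iff]
  refine ContinuousLinearMap.opNorm_le_bound _ zero_le_one fun x => ?_
  rw [one_mul]
  exact (Unitary.norm_map ⟨u, hu⟩ x).le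

theorem exists_smul_eq_of_orthonormal (hv : Orthonormal ℝ v) (hw : Orthonormal ℝ w) :
    ∃ u : OrthogonalGroup V, ∀ i, u • v i = w i := by
  let bv := Module.Basis.span hv.linearIndependent
  have hbv : Orthonormal ℝ bv := by
    convert orthonormal_span hv
    exact congrArg Subtype.val (Module.Basis.span_apply hv.linearIndependent _)
  have hbw : Orthonormal ℝ (bv.constr ℝ w ∘ bv) := by
    simpa [Function.comp_def, bv.constr_basis] using hw
  let L := ((bv.constr ℝ w).isometryOfOrthonormal hbv hbw).extend
  refine ⟨Unitary.linearIsometryEquiv.symm (L.toLinearIsometryEquiv rfl), fun i => ?_⟩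
  have hLi : L (bv i) = bv.constr ℝ w (bv i) := LinearIsometry.extend_apply _ _
  rwa [bv.constr_basis, Module.Basis.span_apply] at hLi

theorem exists_smul_eq_of_mem_sphere (σ τ : sphere (0 : V) 1) :
    ∃ u : OrthogonalGroup V, u • σ = τ := by
  have hunit (ρ : sphere (0 : V) 1) : Orthonormal ℝ fun _ : Unit => (ρ : V) := by
    simp
  obtain ⟨u, hu⟩ := exists_smul_eq_of_orthonormal (hunit σ) (hunit τ)
  exact ⟨u, Subtype.ext (hu ())⟩

theorem lintegral_smul_orthonormal_eq {ν : Measure (OrthogonalGroup V)} [ν.IsMulRightInvariant]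
    (hv : Orthonormal ℝ v) (hw : Orthonormal ℝ w) (Φ : (ι → V) → ENNReal) :
    ∫⁻ g, Φ (fun i => g • v i) ∂ν = ∫⁻ g, Φ (fun i => g • w i) ∂ν := by
  obtain ⟨u, hu⟩ := exists_smul_eq_of_orthonormal hv hw
  rw [← lintegral_mul_right_eq_self (fun g : OrthogonalGroup V => Φ fun i => g • v i) u]
  simp only [mul_smul, hu]

end OrthogonalGroup

section GreatCircle

open Real

variable {V : Type*} [NormedAddCommGroup V] [InnerProductSpace ℝ V] {x v : V}

/-- The great circle through the unit vector `x` with unit tangent `v` at `x`, parametrised by arc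
length. -/
def greatCircle (x v : V) (φ : ℝ) : V := cos φ • x + sin φ • v

theorem greatCircle_add_pi (x v : V) (φ : ℝ) : greatCircle x v (φ + π) = -greatCircle x v φ := by
  simp only [greatCircle, cos_add_pi, sin_add_pi]
  module

theorem greatCircle_greatCircle (x v : V) (α φ : ℝ) :
    greatCircle (greatCircle x v α) (greatCircle x v (α + π / 2)) φ = greatCircle x v (α + φ) := by
  simp only [greatCircle, cos_add_pi_div_two, sin_add_pi_div_two, cos_add α φ, sin_add α φ]
  module

theorem hasDerivAt_greatCircle (x v : V) (φ : ℝ) :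
    HasDerivAt (greatCircle x v) (greatCircle x v (φ + π / 2)) φ := by
  rw [greatCircle, cos_add_pi_div_two, sin_add_pi_div_two]
  exact ((hasDerivAt_cos φ).smul_const x).add ((hasDerivAt_sin φ).smul_const v)

theorem continuous_greatCircle (x v : V) : Continuous (greatCircle x v) :=
  continuous_iff_continuousAt.mpr fun φ => (hasDerivAt_greatCircle x v φ).continuousAt

theorem OrthogonalGroup.smul_greatCircle [CompleteSpace V] (g : OrthogonalGroup V) (x v : V)
    (φ : ℝ) : g • greatCircle x v φ = greatCircle (g • x) (g • v) φ := by
  simp only [greatCircle, smul_add, smul_comm g]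

theorem orthonormal_pair_iff : Orthonormal ℝ ![x, v] ↔ ‖x‖ = 1 ∧ ‖v‖ = 1 ∧ ⟪x, v⟫ = 0 := by
  simp [orthonormal_vecCons_iff, and_comm, and_left_comm]

theorem orthonormal_greatCircle (h : Orthonormal ℝ ![x, v]) (α : ℝ) :
    Orthonormal ℝ ![greatCircle x v α, greatCircle x v (α + π / 2)] := by
  obtain ⟨hx, hv, hxv⟩ := orthonormal_pair_iff.mp h
  have hinner (a b c d : ℝ) : ⟪a • x + b • v, c • x + d • v⟫ = a * c + b * d := by
    simp [inner_add_left, inner_add_right, inner_smul_left, inner_smul_right, hx, hv, hxv,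
      real_inner_comm, mul_comm]
  have hnorm (φ : ℝ) : ‖greatCircle x v φ‖ = 1 := by
    rw [← sq_eq_sq₀ (norm_nonneg _) zero_le_one, ← real_inner_self_eq_norm_sq, greatCircle, hinner]
    nlinarith [cos_sq_add_sin_sq φ]
  refine orthonormal_pair_iff.mpr ⟨hnorm _, hnorm _, ?_⟩
  rw [greatCircle, greatCircle, hinner, cos_add_pi_div_two, sin_add_pi_div_two]
  ring

theorem inner_greatCircle (h : Orthonormal ℝ ![x, v]) (φ : ℝ) : ⟪x, greatCircle x v φ⟫ = cos φ := by
  obtain ⟨hx, -, hxv⟩ := orthonormal_pair_iff.mp h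
  simp [greatCircle, inner_add_right, inner_smul_right, hx, hxv]

theorem norm_greatCircle (h : Orthonormal ℝ ![x, v]) (φ : ℝ) : ‖greatCircle x v φ‖ = 1 :=
  (orthonormal_greatCircle h φ).1 0

theorem exists_norm_eq_one_norm_smul_eq {W : Type*} [NormedAddCommGroup W] [NormedSpace ℝ W]
    [Nontrivial W] (w : W) : ∃ v : W, ‖v‖ = 1 ∧ ‖w‖ • v = w := by
  rcases eq_or_ne w 0 with rfl | hw
  · obtain ⟨v, hv⟩ := exists_norm_eq W zero_le_one
    exact ⟨v, hv, by simp⟩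
  · exact ⟨‖w‖⁻¹ • w, norm_smul_inv_norm hw, smul_inv_smul₀ (norm_ne_zero_iff.mpr hw) w⟩

theorem nontrivial_orthogonal_span_singleton (hV : 2 ≤ Module.finrank ℝ V) (x : V) :
    Nontrivial (ℝ ∙ x)ᗮ := by
  rw [Submodule.nontrivial_iff_ne_bot, Ne, Submodule.orthogonal_eq_bot_iff]
  intro htop
  have hle : Module.finrank ℝ (ℝ ∙ x) ≤ 1 := by
    simpa using finrank_span_le_card (R := ℝ) ({x} : Set V)
  rw [htop, finrank_top] at hle
  omega

theorem exists_greatCircle_eq (hV : 2 ≤ Module.finrank ℝ V) {y : V} (hx : ‖x‖ = 1)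
    (hy : ‖y‖ = 1) : ∃ v φ, Orthonormal ℝ ![x, v] ∧ greatCircle x v φ = y := by
  have := nontrivial_orthogonal_span_singleton hV x
  have hw : y - ⟪x, y⟫ • x ∈ (ℝ ∙ x)ᗮ := by
    simp [Submodule.mem_orthogonal_singleton_iff_inner_right, inner_sub_right, inner_smul_right, hx]
  obtain ⟨⟨v, hxv⟩, hv, hvw⟩ := exists_norm_eq_one_norm_smul_eq (⟨_, hw⟩ : (ℝ ∙ x)ᗮ)
  have hbound : |⟪x, y⟫| ≤ 1 := by simpa [hx, hy] using abs_real_inner_le_norm x y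
  have hsin : √(1 - ⟪x, y⟫ ^ 2) = ‖y - ⟪x, y⟫ • x‖ := by
    have hsq : ‖y - ⟪x, y⟫ • x‖ ^ 2 = 1 - ⟪x, y⟫ ^ 2 := by
      rw [norm_sub_sq_real, inner_smul_right, real_inner_comm, norm_smul, hx, hy, mul_one,
        norm_eq_abs, sq_abs]
      ring
    rw [← hsq, sqrt_sq (norm_nonneg _)]
  have hvw' : ‖y - ⟪x, y⟫ • x‖ • v = y - ⟪x, y⟫ • x := congrArg Subtype.val hvw
  refine ⟨v, arccos ⟪x, y⟫, orthonormal_pair_iff.mpr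
    ⟨hx, hv, Submodule.mem_orthogonal_singleton_iff_inner_right.mp hxv⟩, ?_⟩
  rw [greatCircle, cos_arccos (abs_le.mp hbound).1 (abs_le.mp hbound).2, sin_arccos, hsin,
    hvw', add_sub_cancel]

end GreatCircle

section Averaging

open Module Real

variable {V : Type*} [NormedAddCommGroup V] [InnerProductSpace ℝ V]

theorem continuousOn_gradient_of_isOpen {𝕜 H : Type*} [RCLike 𝕜] [NormedAddCommGroup H]
    [InnerProductSpace 𝕜 H] [CompleteSpace H] {f : H → 𝕜} {s : Set H} (hf : ContDiffOn 𝕜 1 f s)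
    (hs : IsOpen s) : ContinuousOn (gradient f) s :=
  (InnerProductSpace.toDual 𝕜 H).symm.continuous.comp_continuousOn
    (hf.continuousOn_fderiv_of_isOpen hs le_rfl)

theorem lintegral_comp_greatCircle_sub_sq_le [CompleteSpace V] {f : V → ℝ} {x v : V}
    (hf : ContDiffOn ℝ 1 f {0}ᶜ) (hfeven : f.Even) (h : Orthonormal ℝ ![x, v]) (θ : ℝ) :
    ∫⁻ φ in Set.Ioc 0 π, ‖f (greatCircle x v (φ + θ)) - f (greatCircle x v φ)‖ₑ ^ 2
      ≤ ‖sin θ‖ₑ ^ 2 * ∫⁻ φ in Set.Ioc 0 π,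
          ‖⟪gradient f (greatCircle x v φ), greatCircle x v (φ + π / 2)⟫‖ₑ ^ 2 := by
  have hne (φ : ℝ) : greatCircle x v φ ∈ ({0}ᶜ : Set V) :=
    norm_ne_zero_iff.mp <| (norm_greatCircle h φ).trans_ne one_ne_zero
  have hγ := continuous_greatCircle x v
  have hopen : IsOpen ({0}ᶜ : Set V) := isOpen_compl_singleton
  refine lintegral_enorm_comp_add_right_sub_sq_le (f := fun φ => f (greatCircle x v φ))
    (fun φ => ?_) ?_ (fun φ => ?_) θ
  · have hfφ := (hf.differentiableOn one_ne_zero).differentiableAt (hopen.mem_nhds (hne φ))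
    rw [inner_gradient_left]
    exact hfφ.hasFDerivAt.comp_hasDerivAt φ (hasDerivAt_greatCircle x v φ)
  · exact ((continuousOn_gradient_of_isOpen hf hopen).comp_continuous hγ hne).inner (by fun_prop)
  · simp only [greatCircle_add_pi, hfeven (greatCircle x v φ)]

theorem sum_enorm_inner_sq_le {ι : Type*} [Fintype ι] {u : ι → V} (hu : Orthonormal ℝ u) (x : V) :
    ∑ i, ‖⟪x, u i⟫‖ₑ ^ 2 ≤ ‖x‖ₑ ^ 2 := by
  have hbessel := hu.sum_inner_products_le (x := x) (s := .univ)
  simp only [← ofReal_norm, ← ENNReal.ofReal_pow (norm_nonneg _), real_inner_comm x] at hbessel ⊢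
  rw [← ENNReal.ofReal_sum_of_nonneg fun i _ => sq_nonneg _]
  exact ENNReal.ofReal_le_ofReal hbessel

variable [FiniteDimensional ℝ V] {ν : Measure (OrthogonalGroup V)} [ν.IsMulRightInvariant]

theorem lintegral_smul_orthonormal_pair_eq {x v y w : V} (hxv : Orthonormal ℝ ![x, v])
    (hyw : Orthonormal ℝ ![y, w]) (Φ : V → V → ENNReal) :
    ∫⁻ g, Φ (g • x) (g • v) ∂ν = ∫⁻ g, Φ (g • y) (g • w) ∂ν :=
  OrthogonalGroup.lintegral_smul_orthonormal_eq hxv hyw fun p => Φ (p 0) (p 1)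

variable [MeasurableSpace V] [BorelSpace V]

theorem lintegral_lintegral_smul_greatCircle_eq [SFinite ν] {Φ : V → V → ENNReal}
    (hΦ : Measurable (Function.uncurry Φ)) {x v : V} (h : Orthonormal ℝ ![x, v])
    (μ : Measure ℝ) [SFinite μ] :
    ∫⁻ g : OrthogonalGroup V, ∫⁻ φ, Φ (greatCircle (g • x) (g • v) φ)
        (greatCircle (g • x) (g • v) (φ + π / 2)) ∂μ ∂ν
      = (∫⁻ g : OrthogonalGroup V, Φ (g • x) (g • v) ∂ν) * μ Set.univ := by
  simp only [← OrthogonalGroup.smul_greatCircle]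
  have hγ := continuous_greatCircle x v
  have hpair : Continuous fun p : OrthogonalGroup V × ℝ =>
      (p.1 • greatCircle x v p.2, p.1 • greatCircle x v (p.2 + π / 2)) := by fun_prop
  have hΦγ : Measurable (Function.uncurry fun (g : OrthogonalGroup V) (φ : ℝ) =>
      Φ (g • greatCircle x v φ) (g • greatCircle x v (φ + π / 2))) := hΦ.comp hpair.measurable
  rw [lintegral_lintegral_swap hΦγ.aemeasurable, ← lintegral_const]
  exact lintegral_congr fun φ =>
    lintegral_smul_orthonormal_pair_eq (orthonormal_greatCircle h φ) h Φ

variable {f : V → ℝ}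

theorem lintegral_smul_greatCircle_sub_sq_le [SFinite ν] (hf : ContDiffOn ℝ 1 f {0}ᶜ)
    (hfeven : f.Even) {x v : V} (h : Orthonormal ℝ ![x, v]) (θ : ℝ) :
    ∫⁻ g : OrthogonalGroup V, ‖f (g • greatCircle x v θ) - f (g • x)‖ₑ ^ 2 ∂ν
      ≤ ‖sin θ‖ₑ ^ 2 * ∫⁻ g : OrthogonalGroup V, ‖⟪gradient f (g • x), g • v⟫‖ₑ ^ 2 ∂ν := by
  have hfm := measurable_of_continuousOn_compl_singleton 0 hf.continuousOn
  have hgm := measurable_of_continuousOn_compl_singleton 0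
    (continuousOn_gradient_of_isOpen hf isOpen_compl_singleton)
  have hγ : Continuous fun p : V × V => greatCircle p.1 p.2 θ := by
    simp only [greatCircle]
    fun_prop
  let Φ (a c : V) : ENNReal := ‖f (greatCircle a c θ) - f a‖ₑ ^ 2
  let Ψ (a c : V) : ENNReal := ‖⟪gradient f a, c⟫‖ₑ ^ 2
  have hΦ : Measurable (Function.uncurry Φ) :=
    ((hfm.comp hγ.measurable).sub (hfm.comp measurable_fst)).enorm.pow_const 2
  have hΨ : Measurable (Function.uncurry Ψ) :=
    ((hgm.comp measurable_fst).inner measurable_snd).enorm.pow_const 2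
  have horth (g : OrthogonalGroup V) : Orthonormal ℝ ![g • x, g • v] := by
    simpa only [orthonormal_pair_iff, OrthogonalGroup.norm_smul_eq,
      OrthogonalGroup.inner_smul_smul] using h
  have hmean : (∫⁻ g : OrthogonalGroup V, Φ (g • x) (g • v) ∂ν) *
        volume.restrict (Set.Ioc 0 π) Set.univ
      ≤ (‖sin θ‖ₑ ^ 2 * ∫⁻ g : OrthogonalGroup V, Ψ (g • x) (g • v) ∂ν) *
        volume.restrict (Set.Ioc 0 π) Set.univ := by
    rw [mul_assoc, ← lintegral_lintegral_smul_greatCircle_eq hΦ h,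
      ← lintegral_lintegral_smul_greatCircle_eq hΨ h, ← lintegral_const_mul' _ _ (by simp)]
    refine lintegral_mono fun g => ?_
    simp only [Φ, Ψ, greatCircle_greatCircle]
    exact lintegral_comp_greatCircle_sub_sq_le hf hfeven (horth g) θ
  simp only [OrthogonalGroup.smul_greatCircle]
  refine (ENNReal.mul_le_mul_iff_left ?_ ?_).mp hmean <;> simp [pi_pos]

theorem finrank_sub_one_mul_lintegral_inner_smul_sq_le {X : V → V} (hX : Measurable X) {x v : V}
    (h : Orthonormal ℝ ![x, v]) :
    ((finrank ℝ V : ENNReal) - 1) *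
        ∫⁻ g : OrthogonalGroup V, ‖⟪X (g • x), g • v⟫‖ₑ ^ 2 ∂ν
      ≤ ∫⁻ g : OrthogonalGroup V, ‖X (g • x)‖ₑ ^ 2 ∂ν := by
  obtain ⟨hx, -, -⟩ := orthonormal_pair_iff.mp h
  let u := stdOrthonormalBasis ℝ (ℝ ∙ x)ᗮ
  have hxu (i) : ⟪x, (u i : V)⟫ = 0 :=
    Submodule.mem_orthogonal_singleton_iff_inner_right.mp (u i).2
  have hu (i) : Orthonormal ℝ ![x, (u i : V)] :=
    orthonormal_pair_iff.mpr ⟨hx, u.norm_eq_one i, hxu i⟩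
  have hcard : (finrank ℝ V : ENNReal) - 1 = (finrank ℝ (ℝ ∙ x)ᗮ : ENNReal) := by
    rw [← (ℝ ∙ x).finrank_add_finrank_orthogonal,
      finrank_span_singleton (norm_ne_zero_iff.mp (hx.trans_ne one_ne_zero)), Nat.cast_add,
      Nat.cast_one, ENNReal.add_sub_cancel_left ENNReal.one_ne_top]
  have hmeas (i) : Measurable fun g : OrthogonalGroup V => ‖⟪X (g • x), g • (u i : V)⟫‖ₑ ^ 2 := by
    refine ((hX.comp ?_).inner ?_).enorm.pow_const 2 <;> exact Continuous.measurable (by fun_prop)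
  have hgu (g : OrthogonalGroup V) : Orthonormal ℝ fun i => g • (u i : V) :=
    OrthogonalGroup.orthonormal_smul
      (u.orthonormal.comp_linearIsometry (ℝ ∙ x)ᗮ.subtypeₗᵢ) g
  have hinv (i) : ∫⁻ g : OrthogonalGroup V, ‖⟪X (g • x), g • (u i : V)⟫‖ₑ ^ 2 ∂ν
      = ∫⁻ g : OrthogonalGroup V, ‖⟪X (g • x), g • v⟫‖ₑ ^ 2 ∂ν :=
    lintegral_smul_orthonormal_pair_eq (hu i) h fun a c => ‖⟪X a, c⟫‖ₑ ^ 2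
  calc _ = ∑ i, ∫⁻ g : OrthogonalGroup V, ‖⟪X (g • x), g • (u i : V)⟫‖ₑ ^ 2 ∂ν := by
        simp [hinv, hcard]
    _ = ∫⁻ g : OrthogonalGroup V, ∑ i, ‖⟪X (g • x), g • (u i : V)⟫‖ₑ ^ 2 ∂ν :=
        (lintegral_finsetSum _ fun i _ => hmeas i).symm
    _ ≤ _ := lintegral_mono fun g => sum_enorm_inner_sq_le (hgu g) _

theorem finrank_sub_one_mul_lintegral_smul_sub_sq_le [SFinite ν] (hV : 2 ≤ finrank ℝ V)
    (hf : ContDiffOn ℝ 1 f {0}ᶜ) (hfeven : f.Even) {x y : V} (hx : ‖x‖ = 1) (hy : ‖y‖ = 1) :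
    ((finrank ℝ V : ENNReal) - 1) * ∫⁻ g : OrthogonalGroup V, ‖f (g • y) - f (g • x)‖ₑ ^ 2 ∂ν
      ≤ ‖1 - ⟪x, y⟫ ^ 2‖ₑ * ∫⁻ g : OrthogonalGroup V, ‖gradient f (g • x)‖ₑ ^ 2 ∂ν := by
  obtain ⟨v, θ, h, rfl⟩ := exists_greatCircle_eq hV hx hy
  have hsin : ‖1 - ⟪x, greatCircle x v θ⟫ ^ 2‖ₑ = ‖sin θ‖ₑ ^ 2 := by
    rw [inner_greatCircle h, ← sin_sq, enorm_pow]
  have hgm := measurable_of_continuousOn_compl_singleton 0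
    (continuousOn_gradient_of_isOpen hf isOpen_compl_singleton)
  calc _ ≤ ((finrank ℝ V : ENNReal) - 1) * (‖sin θ‖ₑ ^ 2 *
          ∫⁻ g : OrthogonalGroup V, ‖⟪gradient f (g • x), g • v⟫‖ₑ ^ 2 ∂ν) := by
        gcongr
        exact lintegral_smul_greatCircle_sub_sq_le hf hfeven h θ
    _ = ‖sin θ‖ₑ ^ 2 * (((finrank ℝ V : ENNReal) - 1) *
          ∫⁻ g : OrthogonalGroup V, ‖⟪gradient f (g • x), g • v⟫‖ₑ ^ 2 ∂ν) := mul_left_comm _ _ _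
    _ ≤ _ := by
        rw [hsin]
        gcongr
        exact finrank_sub_one_mul_lintegral_inner_smul_sq_le hgm h

end Averaging

section Sphere

open Metric Module

theorem lintegral_eq_lintegral_lintegral_smul {G α : Type*} [SMul G α]
    [MeasurableSpace G] [MeasurableSpace α] [MeasurableSMul₂ G α] {μ : Measure α} [SFinite μ]
    [SMulInvariantMeasure G α μ] {ν : Measure G} [IsProbabilityMeasure ν] {Φ : α → ENNReal}
    (hΦ : Measurable Φ) : ∫⁻ a, Φ a ∂μ = ∫⁻ a, ∫⁻ g, Φ (g • a) ∂ν ∂μ := by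
  have hΦg : Measurable (Function.uncurry fun a (g : G) => Φ (g • a)) :=
    hΦ.comp (measurable_snd.smul measurable_fst)
  rw [lintegral_lintegral_swap hΦg.aemeasurable]
  have hinv (g : G) : ∫⁻ a, Φ (g • a) ∂μ = ∫⁻ a, Φ a ∂μ :=
    (measurePreserving_smul g μ).lintegral_comp hΦ
  simp [hinv]

theorem smulInvariantMeasure_prod {G α β : Type*} [SMul G α] [SMul G β]
    [MeasurableSpace α] [MeasurableSpace β] [MeasurableConstSMul G α]
    [MeasurableConstSMul G β] {μ : Measure α} {ρ : Measure β} [SFinite μ] [SFinite ρ]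
    [SMulInvariantMeasure G α μ] [SMulInvariantMeasure G β ρ] :
    SMulInvariantMeasure G (α × β) (μ.prod ρ) :=
  ⟨fun g _ hs =>
    ((measurePreserving_smul g μ).prod (measurePreserving_smul g ρ)).measure_preimage
      hs.nullMeasurableSet⟩

theorem ofReal_integral_eq_lintegral_enorm {α : Type*} [MeasurableSpace α] {ρ : Measure α}
    {h : α → ℝ} (hint : Integrable h ρ) (hpos : ∀ a, 0 ≤ h a) :
    ENNReal.ofReal (∫ a, h a ∂ρ) = ∫⁻ a, ‖h a‖ₑ ∂ρ := by
  rw [← ofReal_integral_norm_eq_lintegral_enorm hint]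
  simp only [Real.norm_of_nonneg (hpos _)]

variable {V : Type*} [NormedAddCommGroup V] [InnerProductSpace ℝ V]

theorem inner_mem_Icc_of_mem_sphere (σ τ : sphere (0 : V) 1) :
    ⟪(σ : V), (τ : V)⟫ ∈ Set.Icc (-1 : ℝ) 1 := by
  have h := abs_real_inner_le_norm (σ : V) (τ : V)
  rwa [norm_eq_of_mem_sphere, norm_eq_of_mem_sphere, mul_one, abs_le] at h

variable [FiniteDimensional ℝ V] [MeasurableSpace V] [BorelSpace V] {μ : Measure (sphere (0 : V) 1)}

theorem ofReal_integral_integral_sq_mul_le [SFinite μ] {b : ℝ → ℝ} (hb : Measurable b) {f : V → ℝ}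
    (hf : Measurable f) :
    ENNReal.ofReal (∫ σ : sphere (0 : V) 1, ∫ τ : sphere (0 : V) 1,
        (f τ - f σ) ^ 2 * b ⟪(τ : V), σ⟫ ∂μ ∂μ)
      ≤ ∫⁻ p : sphere (0 : V) 1 × sphere (0 : V) 1,
          ‖f p.2 - f p.1‖ₑ ^ 2 * ‖b ⟪(p.1 : V), p.2⟫‖ₑ ∂μ.prod μ := by
  rw [lintegral_prod _ (by fun_prop)]
  refine (Real.ofReal_le_enorm _).trans <| (enorm_integral_le_lintegral_enorm _).trans <|
    lintegral_mono fun σ => (enorm_integral_le_lintegral_enorm _).trans_eq ?_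
  simp only [enorm_mul, enorm_pow, real_inner_comm]

variable [SMulInvariantMeasure (OrthogonalGroup V) (sphere (0 : V) 1) μ]

theorem lintegral_comp_inner_eq (k : ℝ → ENNReal) (e σ : sphere (0 : V) 1) :
    ∫⁻ τ : sphere (0 : V) 1, k ⟪(σ : V), τ⟫ ∂μ = ∫⁻ τ : sphere (0 : V) 1, k ⟪(e : V), τ⟫ ∂μ := by
  obtain ⟨u, rfl⟩ := OrthogonalGroup.exists_smul_eq_of_mem_sphere e σ
  rw [← (measurePreserving_smul u μ).lintegral_comp_emb (measurableEmbedding_const_smul u)]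
  simp

theorem lintegral_prod_comp_inner_mul_eq [SFinite μ] {k : ℝ → ENNReal} (hk : Measurable k)
    {A : sphere (0 : V) 1 → ENNReal} (hA : Measurable A) (e : sphere (0 : V) 1) :
    ∫⁻ p : sphere (0 : V) 1 × sphere (0 : V) 1, k ⟪(p.1 : V), p.2⟫ * A p.1 ∂μ.prod μ
      = (∫⁻ τ : sphere (0 : V) 1, k ⟪(e : V), τ⟫ ∂μ) * ∫⁻ σ, A σ ∂μ := by
  rw [lintegral_prod _ (by fun_prop), ← lintegral_const_mul _ hA]
  congr with σ
  dsimp only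
  rw [lintegral_mul_const _ (by fun_prop), lintegral_comp_inner_eq k e]

theorem finrank_sub_one_mul_lintegral_prod_sub_sq_le [SFinite μ] (hV : 2 ≤ finrank ℝ V)
    {k : ℝ → ENNReal} (hk : Measurable k) {f : V → ℝ} (hf : ContDiffOn ℝ 1 f {0}ᶜ)
    (hfeven : f.Even) (e : sphere (0 : V) 1) :
    ((finrank ℝ V : ENNReal) - 1) *
        ∫⁻ p : sphere (0 : V) 1 × sphere (0 : V) 1,
          ‖f p.2 - f p.1‖ₑ ^ 2 * k ⟪(p.1 : V), p.2⟫ ∂μ.prod μ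
      ≤ (∫⁻ τ : sphere (0 : V) 1, ‖1 - ⟪(e : V), τ⟫ ^ 2‖ₑ * k ⟪(e : V), τ⟫ ∂μ) *
        ∫⁻ σ : sphere (0 : V) 1, ‖gradient f σ‖ₑ ^ 2 ∂μ := by
  obtain ⟨ν, _, _⟩ := exists_isProbabilityMeasure_isMulRightInvariant (OrthogonalGroup V)
  have := smulInvariantMeasure_prod (G := OrthogonalGroup V) (μ := μ) (ρ := μ)
  have hfm := measurable_of_continuousOn_compl_singleton 0 hf.continuousOn
  have hgm := measurable_of_continuousOn_compl_singleton 0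
    (continuousOn_gradient_of_isOpen hf isOpen_compl_singleton)
  let A (σ : sphere (0 : V) 1) : ENNReal :=
    ∫⁻ g : OrthogonalGroup V, ‖gradient f (g • (σ : V))‖ₑ ^ 2 ∂ν
  have hGm : Measurable fun σ : sphere (0 : V) 1 => ‖gradient f σ‖ₑ ^ 2 := by fun_prop
  have hAm : Measurable A :=
    (hGm.comp (measurable_snd.smul measurable_fst)).lintegral_prod_right'
  have hpair (p : sphere (0 : V) 1 × sphere (0 : V) 1) :
      ((finrank ℝ V : ENNReal) - 1) * ∫⁻ g : OrthogonalGroup V,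
          ‖f (g • (p.2 : V)) - f (g • (p.1 : V))‖ₑ ^ 2 * k ⟪(p.1 : V), p.2⟫ ∂ν
        ≤ ‖1 - ⟪(p.1 : V), p.2⟫ ^ 2‖ₑ * k ⟪(p.1 : V), p.2⟫ * A p.1 := by
    have hmeas : Measurable fun g : OrthogonalGroup V =>
        ‖f (g • (p.2 : V)) - f (g • (p.1 : V))‖ₑ ^ 2 := by
      have hsmul (x : V) : Continuous fun g : OrthogonalGroup V => g • x := by fun_prop
      exact ((hfm.comp (hsmul _).measurable).sub (hfm.comp (hsmul _).measurable)).enorm.pow_const 2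
    rw [lintegral_mul_const _ hmeas, ← mul_assoc, mul_right_comm ‖1 - _‖ₑ]
    gcongr ?_ * _
    exact finrank_sub_one_mul_lintegral_smul_sub_sq_le hV hf hfeven
      (norm_eq_of_mem_sphere p.1) (norm_eq_of_mem_sphere p.2)
  calc _ = ∫⁻ p : sphere (0 : V) 1 × sphere (0 : V) 1, ((finrank ℝ V : ENNReal) - 1) *
          ∫⁻ g : OrthogonalGroup V,
            ‖f (g • (p.2 : V)) - f (g • (p.1 : V))‖ₑ ^ 2 * k ⟪(p.1 : V), p.2⟫ ∂ν ∂μ.prod μ := by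
        have hΦ : Measurable fun p : sphere (0 : V) 1 × sphere (0 : V) 1 =>
            ‖f p.2 - f p.1‖ₑ ^ 2 * k ⟪(p.1 : V), p.2⟫ := by fun_prop
        rw [lintegral_const_mul' _ _ (by finiteness),
          lintegral_eq_lintegral_lintegral_smul (G := OrthogonalGroup V) (ν := ν) hΦ]
        simp only [Prod.smul_fst, Prod.smul_snd, OrthogonalGroup.coe_smul_sphere,
          OrthogonalGroup.inner_smul_smul]
    _ ≤ ∫⁻ p : sphere (0 : V) 1 × sphere (0 : V) 1,
          ‖1 - ⟪(p.1 : V), p.2⟫ ^ 2‖ₑ * k ⟪(p.1 : V), p.2⟫ * A p.1 ∂μ.prod μ := lintegral_mono hpair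
    _ = _ := by
        rw [lintegral_prod_comp_inner_mul_eq (k := fun t => ‖1 - t ^ 2‖ₑ * k t) (by fun_prop) hAm e,
          lintegral_eq_lintegral_lintegral_smul (G := OrthogonalGroup V) (ν := ν) hGm]
        rfl

theorem hardy_inequality_general [IsFiniteMeasure μ] (hV : 2 ≤ finrank ℝ V) {b : ℝ → ℝ}
    (hb : Measurable b) (hb0 : ∀ c ∈ Set.Icc (-1 : ℝ) 1, 0 ≤ b c) {e : sphere (0 : V) 1}
    (hbe : Integrable (fun τ : sphere (0 : V) 1 => (1 - ⟪(e : V), τ⟫ ^ 2) * b ⟪(e : V), τ⟫) μ)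
    {f : V → ℝ} (hf : ContDiffOn ℝ 1 f {0}ᶜ) (hfeven : f.Even) :
    ∫ σ : sphere (0 : V) 1, ∫ τ : sphere (0 : V) 1,
        (f τ - f σ) ^ 2 * b ⟪(τ : V), σ⟫ ∂μ ∂μ
      ≤ 1 / ((finrank ℝ V : ℝ) - 1) *
          (∫ τ : sphere (0 : V) 1, (1 - ⟪(e : V), τ⟫ ^ 2) * b ⟪(e : V), τ⟫ ∂μ) *
          ∫ σ : sphere (0 : V) 1, ‖gradient f σ‖ ^ 2 ∂μ := by
  have hn : (1 : ℝ) < finrank ℝ V := by exact_mod_cast hV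
  have hk0 (τ : sphere (0 : V) 1) : 0 ≤ (1 - ⟪(e : V), τ⟫ ^ 2) * b ⟪(e : V), τ⟫ := by
    have hmem := inner_mem_Icc_of_mem_sphere e τ
    exact mul_nonneg (sub_nonneg.mpr <| (sq_le_one_iff_abs_le_one _).mpr <| abs_le.mpr hmem)
      (hb0 _ hmem)
  have hgrad : Continuous fun σ : sphere (0 : V) 1 => ‖gradient f σ‖ ^ 2 :=
    ((continuousOn_gradient_of_isOpen hf isOpen_compl_singleton).comp_continuous
      continuous_subtype_val fun σ => ne_zero_of_mem_unit_sphere σ).norm.pow 2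
  have hgradi := hgrad.integrable_of_hasCompactSupport (μ := μ) (.of_compactSpace _)
  have hfm := measurable_of_continuousOn_compl_singleton 0 hf.continuousOn
  have hmain := finrank_sub_one_mul_lintegral_prod_sub_sq_le (μ := μ) hV hb.enorm hf hfeven e
  rw [one_div, mul_assoc, ← div_eq_inv_mul, le_div_iff₀' (sub_pos.mpr hn),
    ← ENNReal.ofReal_le_ofReal_iff
      (mul_nonneg (integral_nonneg hk0) (integral_nonneg fun σ => sq_nonneg _)),
    ENNReal.ofReal_mul (sub_pos.mpr hn).le, ENNReal.ofReal_mul (integral_nonneg hk0),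
    ofReal_integral_eq_lintegral_enorm hbe hk0,
    ofReal_integral_eq_lintegral_enorm hgradi fun σ => sq_nonneg _,
    ENNReal.ofReal_sub _ zero_le_one, ENNReal.ofReal_natCast, ENNReal.ofReal_one]
  simp only [enorm_mul, enorm_pow, enorm_norm]
  refine le_trans ?_ hmain
  gcongr
  exact ofReal_integral_integral_sq_mul_le hb hfm

end Sphere

section HomogExt

variable {d : ℕ} {F : Sph d → ℝ}

theorem homogExt_coe (F : Sph d → ℝ) (σ : Sph d) : homogExt F σ = F σ := by
  rw [homogExt, dif_neg (ne_zero_of_mem_unit_sphere σ)]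
  congr
  ext1
  simp

theorem even_homogExt (hF : ∀ σ, F (-σ) = F σ) : (homogExt F).Even := fun x => by
  rcases eq_or_ne x 0 with rfl | hx
  · rw [neg_zero]
  · rw [homogExt, homogExt, dif_neg hx, dif_neg (neg_ne_zero.mpr hx), ← hF]
    congr
    ext1
    simp

instance : SMulInvariantMeasure (OrthogonalGroup (E d)) (Sph d) (sphMeasure d) :=
  inferInstanceAs (SMulInvariantMeasure (OrthogonalGroup (E d)) (Sph d) μH[(d : ℝ) - 1])

end HomogExt

/-- Hardy-type inequality with constant
`C_P = (1/(d-1)) ∫ (1 - (e·σ')²) b(e·σ') dσ'`. -/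
theorem hardy_inequality
    (d : ℕ) (hd : 2 ≤ d) (b : ℝ → ℝ) (hb : LevyKernel d b)
    (F : Sph d → ℝ) (hF : SphSmooth F) (hFeven : ∀ σ, F (-σ) = F σ) (e : Sph d) :
    ∫ (σ : Sph d), (∫ (σ' : Sph d),
          (F σ' - F σ) ^ 2 * b ⟪(σ' : E d), (σ : E d)⟫ ∂(sphMeasure d)) ∂(sphMeasure d)
      ≤ (1 / ((d : ℝ) - 1)) *
          (∫ (σ' : Sph d),
            (1 - ⟪(e : E d), (σ' : E d)⟫ ^ 2) * b ⟪(e : E d), (σ' : E d)⟫ ∂(sphMeasure d)) *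
          ∫ (σ : Sph d), ‖sphGrad F σ‖ ^ 2 ∂(sphMeasure d) := by
  obtain ⟨hbm, hb0, hbi⟩ := hb
  have hd' : 2 ≤ Module.finrank ℝ (E d) := by rwa [finrank_euclideanSpace_fin]
  have hmain := hardy_inequality_general hd' hbm hb0 (hbi e)
    (hF.of_le (by exact_mod_cast le_top)) (even_homogExt hFeven)
  simpa only [homogExt_coe, sphGrad, finrank_euclideanSpace_fin] using hmain
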